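/- arXiv:2405.19809 — 4 statements merged into one kernel-verified Lean document; each statement's English description precedes it below -/
import Mathlib

section
/- Let F : E → ℝ be twice continuously differentiable and (γ,μ)-strongly quasar convex with respect to its minimizer x*, with γ ∈ (0,1] and μ > 0. Then for every x ≠ x* and every t > 0: (1/t) ∫₀ᵗ ⟨∇²F(x* + s(x − x*))(x* − x), x* − x⟩ / ‖x − x*‖² ds ≥ γμ/2. (On average along segments emanating from the minimizer the Hessian curvature is at least γμ/2.) -/
open scoped RealInnerProductSpace

/-!
Along a ray `u ↦ x⋆ + u • d` from a critical point, the fundamental theorem of calculus turns the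
average over `[0, t]` of the Rayleigh quotient of the Hessian in direction `d` into
`⟪∇F y, y - x⋆⟫ / ‖y - x⋆‖ ^ 2`, where `y = x⋆ + t • d` is the endpoint. Strong quasar convexity at
`y`, after discarding `F y - F x⋆ ≥ 0`, bounds this last quotient below by `γ * μ / 2`.
-/

section Line

variable {E V : Type*} [NormedAddCommGroup E] [NormedSpace ℝ E]

theorem integral_fderiv_add_smul [NormedAddCommGroup V] [NormedSpace ℝ V] [CompleteSpace V]
    {G : E → V} (hG : ContDiff ℝ 1 G) (a d : E) (s t : ℝ) :
    ∫ u in s..t, fderiv ℝ G (a + u • d) d = G (a + t • d) - G (a + s • d) := by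
  have hderiv (u : ℝ) : HasDerivAt (fun u : ℝ ↦ G (a + u • d)) (fderiv ℝ G (a + u • d) d) u := by
    have hline : HasDerivAt (fun u : ℝ ↦ a + u • d) d u := by
      simpa using ((hasDerivAt_id u).smul_const d).const_add a
    exact (hG.differentiable one_ne_zero _).hasFDerivAt.comp_hasDerivAt u hline
  have hcont : Continuous fun u : ℝ ↦ fderiv ℝ G (a + u • d) d :=
    ((hG.continuous_fderiv one_ne_zero).comp (by fun_prop)).clm_apply continuous_const
  exact intervalIntegral.integral_eq_sub_of_hasDerivAt (fun u _ ↦ hderiv u)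
    (hcont.intervalIntegrable s t)

theorem integral_inner_fderiv_add_smul [NormedAddCommGroup V] [InnerProductSpace ℝ V]
    {G : E → V} (hG : ContDiff ℝ 1 G) (a d : E) (w : V) (s t : ℝ) :
    ∫ u in s..t, ⟪fderiv ℝ G (a + u • d) d, w⟫ = ⟪G (a + t • d) - G (a + s • d), w⟫ := by
  have hfderiv (y : E) : fderiv ℝ (fun y ↦ ⟪G y, w⟫) y d = ⟪fderiv ℝ G y d, w⟫ := by
    simp [fderiv_inner_apply ℝ (hG.differentiable one_ne_zero y) (differentiableAt_const w)]
  simpa only [hfderiv, inner_sub_left] using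
    integral_fderiv_add_smul (hG.inner ℝ (contDiff_const (c := w))) a d s t

end Line

section InnerProductSpace

variable {E : Type*} [NormedAddCommGroup E] [InnerProductSpace ℝ E]

theorem average_rayleigh_fderiv_eq_of_eq_zero {G : E → E} (hG : ContDiff ℝ 1 G) {a : E}
    (ha : G a = 0) (d : E) (t : ℝ) :
    (1 / t) * ∫ u in (0 : ℝ)..t, ⟪fderiv ℝ G (a + u • d) d, d⟫ / ‖d‖ ^ 2 =
      ⟪G (a + t • d), t • d⟫ / ‖t • d‖ ^ 2 := by
  rw [intervalIntegral.integral_div, integral_inner_fderiv_add_smul hG, zero_smul, add_zero, ha,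
    sub_zero, real_inner_smul_right, norm_smul, mul_pow, Real.norm_eq_abs, sq_abs]
  field_simp

variable [CompleteSpace E] {F : E → ℝ} {xstar : E} {γ μ : ℝ}

theorem contDiff_gradient {n m : WithTop ℕ∞} (hF : ContDiff ℝ n F) (hmn : m + 1 ≤ n) :
    ContDiff ℝ m (gradient F) :=
  (InnerProductSpace.toDual ℝ E).symm.contDiff.comp (hF.fderiv_right hmn)

theorem gradient_eq_zero_of_isLocalMin {a : E} (h : IsLocalMin F a) : gradient F a = 0 := by
  rw [gradient, h.fderiv_eq_zero, map_zero]

/-- `(γ, μ)`-strong quasar convexity of `F` with respect to its minimizer `xstar`. Differentiability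
of `F` and the ranges of `γ` and `μ` are left to the statements that need them. -/
structure IsStronglyQuasarConvex (γ μ : ℝ) (F : E → ℝ) (xstar : E) : Prop where
  le_apply (x : E) : F xstar ≤ F x
  apply_ge (x : E) :
    F xstar ≥ F x + (1 / γ) * ⟪gradient F x, xstar - x⟫ + μ / 2 * ‖xstar - x‖ ^ 2

namespace IsStronglyQuasarConvex

theorem gradient_eq_zero (h : IsStronglyQuasarConvex γ μ F xstar) : gradient F xstar = 0 :=
  gradient_eq_zero_of_isLocalMin (.of_forall h.le_apply)

theorem mul_sq_norm_le_inner_gradient (h : IsStronglyQuasarConvex γ μ F xstar) (hγ : 0 < γ)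
    (x : E) : γ * μ / 2 * ‖x - xstar‖ ^ 2 ≤ ⟪gradient F x, x - xstar⟫ := by
  have hqc := h.apply_ge x
  rw [← neg_sub x xstar, inner_neg_right, norm_neg] at hqc
  have hdiv : μ / 2 * ‖x - xstar‖ ^ 2 ≤ 1 / γ * ⟪gradient F x, x - xstar⟫ := by
    linarith [h.le_apply x]
  calc γ * μ / 2 * ‖x - xstar‖ ^ 2 = γ * (μ / 2 * ‖x - xstar‖ ^ 2) := by ring
    _ ≤ γ * (1 / γ * ⟪gradient F x, x - xstar⟫) := by gcongr
    _ = ⟪gradient F x, x - xstar⟫ := by field_simp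

end IsStronglyQuasarConvex

theorem stmt_16_general (hF : ContDiff ℝ 2 F) (hγ : 0 < γ)
    (h : IsStronglyQuasarConvex γ μ F xstar) {x : E} (hx : x ≠ xstar) {t : ℝ} (ht : 0 < t) :
    γ * μ / 2 ≤ (1 / t) * ∫ u in (0 : ℝ)..t,
      ⟪(fderiv ℝ (gradient F) (xstar + u • (x - xstar))) (xstar - x), xstar - x⟫
        / ‖x - xstar‖ ^ 2 := by
  have hG : ContDiff ℝ 1 (gradient F) := contDiff_gradient hF one_add_one_eq_two.le
  have hpos : 0 < ‖t • (x - xstar)‖ ^ 2 := by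
    have := smul_ne_zero ht.ne' (sub_ne_zero.mpr hx)
    positivity
  simp only [← neg_sub x xstar, map_neg, inner_neg_neg]
  rw [average_rayleigh_fderiv_eq_of_eq_zero hG h.gradient_eq_zero, le_div_iff₀ hpos]
  simpa only [add_sub_cancel_left] using
    h.mul_sq_norm_le_inner_gradient hγ (xstar + t • (x - xstar))

end InnerProductSpace

/-- for a `C²` `(γ,μ)`-strongly quasar convex function, the
average curvature of the Hessian along segments emanating from the minimizer is
at least `γμ/2`.  The Hessian of `F` at `y` applied to `v` is formalized as
`fderiv ℝ (gradient F) y v`. -/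
theorem stmt_16 {E : Type*} [NormedAddCommGroup E] [InnerProductSpace ℝ E]
    [FiniteDimensional ℝ E]
    (F : E → ℝ) (hF : ContDiff ℝ 2 F)
    (μ γ : ℝ) (hμ : 0 < μ) (hγ0 : 0 < γ) (hγ1 : γ ≤ 1)
    (xstar : E) (hmin : ∀ x : E, F xstar ≤ F x)
    (hqc : ∀ x : E,
      F xstar ≥ F x + (1 / γ) * ⟪gradient F x, xstar - x⟫ + μ / 2 * ‖xstar - x‖ ^ 2) :
    ∀ x : E, x ≠ xstar → ∀ t : ℝ, 0 < t →
      γ * μ / 2 ≤ (1 / t) * ∫ u in (0 : ℝ)..t,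
        ⟪(fderiv ℝ (gradient F) (xstar + u • (x - xstar))) (xstar - x), xstar - x⟫
          / ‖x - xstar‖ ^ 2 := by
  exact fun x hx t ht ↦ stmt_16_general hF hγ0 ⟨hmin, hqc⟩ hx ht
end

section
/- Let F : E → ℝ be twice continuously differentiable with a unique minimizer x*, and assume F has μ-quadratic growth for some μ > 0: F(x) − F(x*) ≥ (μ/2)‖x − x*‖² for all x. Then ⟨∇²F(x*)v, v⟩ ≥ μ‖v‖² for all v ∈ E, and for every ε ∈ (0,μ) there exists η > 0 such that for all x in the open ball B(x*, η) and all v ∈ E, ⟨∇²F(x)v, v⟩ ≥ (μ − ε)‖v‖²; in particular F is strongly convex on B(x*, η). -/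
open scoped RealInnerProductSpace

/-!
Everything happens on lines. If `F` has `μ`-quadratic growth at `x₀`, then
`t ↦ F (x₀ + t • v) - μ / 2 * ‖v‖ ^ 2 * t ^ 2` has a local minimum at `0`, so its second derivative
`D²F(x₀)(v, v) - μ * ‖v‖ ^ 2` is nonnegative. Continuity of `D²F` propagates this bound to a ball,
at the cost of `ε`, and on a convex set a lower bound `m` for `D²F` makes the restriction of `F` to
each segment `[x, y]` strongly convex with modulus `m * ‖y - x‖ ^ 2`.
-/

open Filter Set Topology AffineMap

section Real

variable {f f' : ℝ → ℝ}

theorem hasDerivAt2_nonneg_of_isLocalMin {a f'' : ℝ}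
    (hf : ∀ᶠ t in 𝓝 a, HasDerivAt f (f' t) t) (hf' : HasDerivAt f' f'' a) (hmin : IsLocalMin f a) :
    0 ≤ f'' := by
  by_contra! hneg
  have hderiv : deriv f =ᶠ[𝓝 a] f' := hf.mono fun _ ht => ht.deriv
  have hderiv2 : deriv (deriv f) a = f'' := hderiv.deriv_eq.trans hf'.deriv
  have hmax : IsLocalMax f a :=
    isLocalMax_of_deriv_deriv_neg (hderiv2 ▸ hneg) hmin.deriv_eq_zero hf.self_of_nhds.continuousAt
  have hconst : f =ᶠ[𝓝 a] fun _ => f a := by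
    filter_upwards [hmax, hmin] with t hle hge using le_antisymm hle hge
  have hzero : deriv (deriv f) a = 0 := by simpa using hconst.deriv.deriv_eq
  exact hneg.ne (hderiv2.symm.trans hzero)

theorem hasDerivAt_const_div_two_mul_sq (k t : ℝ) :
    HasDerivAt (fun s : ℝ => k / 2 * s ^ 2) (k * t) t :=
  ((hasDerivAt_pow 2 t).const_mul (k / 2)).congr_deriv (by ring)

theorem strongConvexOn_of_le_hasDerivWithinAt2 {D : Set ℝ} {f'' : ℝ → ℝ} {k : ℝ} (hD : Convex ℝ D)
    (hf : ContinuousOn f D) (hf' : ∀ t ∈ interior D, HasDerivWithinAt f (f' t) (interior D) t)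
    (hf'' : ∀ t ∈ interior D, HasDerivWithinAt f' (f'' t) (interior D) t)
    (hk : ∀ t ∈ interior D, k ≤ f'' t) : StrongConvexOn D k f := by
  simp only [strongConvexOn_iff_convex, Real.norm_eq_abs, sq_abs]
  exact convexOn_of_hasDerivWithinAt2_nonneg hD (hf.sub (by fun_prop))
    (fun t ht => (hf' t ht).sub (hasDerivAt_const_div_two_mul_sq k t).hasDerivWithinAt)
    (fun t ht => (hf'' t ht).sub (hasDerivAt_const_mul k).hasDerivWithinAt)
    fun t ht => sub_nonneg.2 (hk t ht)

end Real

section NormedSpace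

variable {E : Type*} [NormedAddCommGroup E] [NormedSpace ℝ E] {f : E → ℝ} {f' : E → StrongDual ℝ E}

theorem le_hasFDerivAt2_of_quadratic_growth {f'' : E →L[ℝ] StrongDual ℝ E} {x : E}
    {μ : ℝ} (hf : ∀ᶠ y in 𝓝 x, HasFDerivAt f (f' y) y) (hf' : HasFDerivAt f' f'' x)
    (hgrowth : ∀ᶠ y in 𝓝 x, μ / 2 * ‖y - x‖ ^ 2 ≤ f y - f x) (v : E) :
    μ * ‖v‖ ^ 2 ≤ f'' v v := by
  have hline (t : ℝ) : HasDerivAt (fun s : ℝ => x + s • v) v t := by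
    simpa using ((hasDerivAt_id t).smul_const v).const_add x
  have htendsto : Tendsto (fun s : ℝ => x + s • v) (𝓝 0) (𝓝 x) := by
    simpa using (hline 0).continuousAt.tendsto
  have hderiv : ∀ᶠ t in 𝓝 (0 : ℝ), HasDerivAt
      (fun s => f (x + s • v) - μ * ‖v‖ ^ 2 / 2 * s ^ 2) (f' (x + t • v) v - μ * ‖v‖ ^ 2 * t) t :=
    (htendsto.eventually hf).mono fun t ht =>
      (ht.comp_hasDerivAt t (hline t)).sub (hasDerivAt_const_div_two_mul_sq _ t)
  have hderiv2 : HasDerivAt (fun s : ℝ => f' (x + s • v) v - μ * ‖v‖ ^ 2 * s)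
      (f'' v v - μ * ‖v‖ ^ 2) 0 := by
    have h : HasDerivAt (fun s : ℝ => f' (x + s • v)) (f'' v) 0 :=
      hf'.comp_hasDerivAt_of_eq 0 (hline 0) (by simp)
    exact ((h.clm_apply (hasDerivAt_const 0 v)).sub (hasDerivAt_const_mul _)).congr_deriv (by simp)
  have hmin : IsLocalMin (fun s : ℝ => f (x + s • v) - μ * ‖v‖ ^ 2 / 2 * s ^ 2) 0 := by
    filter_upwards [htendsto.eventually hgrowth] with t ht
    simp only [add_sub_cancel_left, norm_smul, mul_pow, Real.norm_eq_abs, sq_abs] at ht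
    simp only [zero_smul, add_zero]
    linarith
  exact sub_nonneg.1 (hasDerivAt2_nonneg_of_isLocalMin hderiv hderiv2 hmin)

theorem strongConvexOn_of_le_hasFDerivWithinAt2 {f'' : E → E →L[ℝ] StrongDual ℝ E} {s : Set E}
    {m : ℝ} (hs : Convex ℝ s) (hf : ∀ x ∈ s, HasFDerivWithinAt f (f' x) s x)
    (hf' : ∀ x ∈ s, HasFDerivWithinAt f' (f'' x) s x)
    (hm : ∀ x ∈ s, ∀ v, m * ‖v‖ ^ 2 ≤ f'' x v v) : StrongConvexOn s m f := by
  refine ⟨hs, fun x hx y hy a b ha hb hab => ?_⟩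
  have hmaps : MapsTo (lineMap x y) (Icc (0 : ℝ) 1) s := hs.mapsTo_lineMap hx hy
  have hderiv : ∀ t ∈ Icc (0 : ℝ) 1, HasDerivWithinAt (fun t => f (lineMap x y t))
      (f' (lineMap x y t) (y - x)) (Icc 0 1) t := fun t ht =>
    (hf _ (hmaps ht)).comp_hasDerivWithinAt t hasDerivWithinAt_lineMap hmaps
  have hderiv2 : ∀ t ∈ Icc (0 : ℝ) 1, HasDerivWithinAt (fun t => f' (lineMap x y t) (y - x))
      (f'' (lineMap x y t) (y - x) (y - x)) (Icc 0 1) t := fun t ht => by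
    have h := (hf' _ (hmaps ht)).comp_hasDerivWithinAt t hasDerivWithinAt_lineMap hmaps
    simpa using h.clm_apply (hasDerivWithinAt_const t _ (y - x))
  have hsegment : StrongConvexOn (Icc (0 : ℝ) 1) (m * ‖y - x‖ ^ 2) fun t => f (lineMap x y t) :=
    strongConvexOn_of_le_hasDerivWithinAt2 (convex_Icc 0 1)
      (fun t ht => (hderiv t ht).continuousWithinAt)
      (fun t ht => (hderiv t (interior_subset ht)).mono interior_subset)
      (fun t ht => (hderiv2 t (interior_subset ht)).mono interior_subset)
      fun t ht => hm _ (hmaps (interior_subset ht)) _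
  have hpt : lineMap x y b = a • x + b • y := by
    rw [lineMap_apply_module, eq_sub_of_add_eq hab]
  have h := hsegment.2 (left_mem_Icc.2 zero_le_one) (right_mem_Icc.2 zero_le_one) ha hb hab
  simp only [smul_eq_mul, mul_zero, mul_one, zero_add, lineMap_apply_zero, lineMap_apply_one, hpt,
    zero_sub, norm_neg, norm_one, one_pow] at h ⊢
  rw [norm_sub_rev x y]
  linarith

theorem eventually_sub_mul_norm_sq_le_apply_apply {X : Type*} [TopologicalSpace X]
    {B : X → E →L[ℝ] StrongDual ℝ E} {x : X} {μ ε : ℝ} (hB : ContinuousAt B x) (hε : 0 < ε)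
    (hμ : ∀ v, μ * ‖v‖ ^ 2 ≤ B x v v) : ∀ᶠ y in 𝓝 x, ∀ v, (μ - ε) * ‖v‖ ^ 2 ≤ B y v v := by
  have hclose : ∀ᶠ y in 𝓝 x, dist (B y) (B x) < ε := Metric.continuousAt_iff'.1 hB ε hε
  filter_upwards [hclose] with y hy v
  have hdiff : B x v v - B y v v ≤ ε * ‖v‖ ^ 2 := calc
    B x v v - B y v v = (B x - B y) v v := by simp
    _ ≤ ‖(B x - B y) v v‖ := le_abs_self _
    _ ≤ ‖B x - B y‖ * ‖v‖ * ‖v‖ := (B x - B y).le_opNorm₂ v v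
    _ ≤ ε * ‖v‖ * ‖v‖ := by
      gcongr
      exact (dist_eq_norm' (B y) (B x)).ge.trans hy.le
    _ = ε * ‖v‖ ^ 2 := by ring
  linarith [hμ v]

theorem stmt_17_general {F : E → ℝ} {μ : ℝ} {xstar : E} (hF : ContDiffAt ℝ 2 F xstar)
    (hqg : ∀ᶠ x in 𝓝 xstar, F x - F xstar ≥ μ / 2 * ‖x - xstar‖ ^ 2) :
    (∀ v : E, fderiv ℝ (fderiv ℝ F) xstar v v ≥ μ * ‖v‖ ^ 2) ∧
    ∀ ε : ℝ, 0 < ε → ∃ η : ℝ, 0 < η ∧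
      (∀ x ∈ Metric.ball xstar η, ∀ v : E,
        fderiv ℝ (fderiv ℝ F) x v v ≥ (μ - ε) * ‖v‖ ^ 2) ∧
      StrongConvexOn (Metric.ball xstar η) (μ - ε) F := by
  have hcont : ContinuousAt (fderiv ℝ (fderiv ℝ F)) xstar :=
    (hF.fderiv_right one_add_one_eq_two.le).continuousAt_fderiv one_ne_zero
  have hC2 : ∀ᶠ x in 𝓝 xstar, ContDiffAt ℝ 2 F x := hF.eventually (by simp)
  have hderiv : ∀ᶠ x in 𝓝 xstar, HasFDerivAt F (fderiv ℝ F x) x :=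
    hC2.mono fun _ h => (h.differentiableAt two_ne_zero).hasFDerivAt
  have hderiv2 : ∀ᶠ x in 𝓝 xstar, HasFDerivAt (fderiv ℝ F) (fderiv ℝ (fderiv ℝ F) x) x :=
    hC2.mono fun _ h =>
      ((h.fderiv_right one_add_one_eq_two.le).differentiableAt one_ne_zero).hasFDerivAt
  have hμ := le_hasFDerivAt2_of_quadratic_growth hderiv hderiv2.self_of_nhds hqg
  refine ⟨hμ, fun ε hε => ?_⟩
  have hnear := eventually_sub_mul_norm_sq_le_apply_apply hcont hε hμ
  obtain ⟨η, hη, hball⟩ := Metric.eventually_nhds_iff_ball.1 (hderiv.and (hderiv2.and hnear))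
  exact ⟨η, hη, fun x hx => (hball x hx).2.2,
    strongConvexOn_of_le_hasFDerivWithinAt2 (convex_ball _ _)
      (fun x hx => (hball x hx).1.hasFDerivWithinAt)
      (fun x hx => (hball x hx).2.1.hasFDerivWithinAt) fun x hx => (hball x hx).2.2⟩

end NormedSpace

theorem inner_fderiv_gradient_left {E : Type*} [NormedAddCommGroup E] [InnerProductSpace ℝ E]
    [CompleteSpace E] (f : E → ℝ) (x v w : E) :
    ⟪fderiv ℝ (gradient f) x v, w⟫ = fderiv ℝ (fderiv ℝ f) x v w := by
  rw [← toDual_comp_gradient, LinearIsometryEquiv.comp_fderiv]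
  rfl

/-- a `C²` function with unique minimizer `x*` and `μ`-quadratic
growth has a Hessian bounded below by `μ` at `x*`, and for every `ε ∈ (0,μ)`
it is locally (on a ball around `x*`) with Hessian bounded below by `μ - ε`; in
particular it is strongly convex near `x*`.  The Hessian of `F` at `x` applied
to `v` is formalized as `fderiv ℝ (gradient F) x v`. -/
theorem stmt_17 {E : Type*} [NormedAddCommGroup E] [InnerProductSpace ℝ E]
    [FiniteDimensional ℝ E]
    (F : E → ℝ) (hF : ContDiff ℝ 2 F)
    (μ : ℝ) (hμ : 0 < μ)
    (xstar : E) (hmin : ∀ x : E, F xstar ≤ F x)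
    (huniq : ∀ y : E, (∀ x : E, F y ≤ F x) → y = xstar)
    (hqg : ∀ x : E, F x - F xstar ≥ μ / 2 * ‖x - xstar‖ ^ 2) :
    (∀ v : E, ⟪(fderiv ℝ (gradient F) xstar) v, v⟫ ≥ μ * ‖v‖ ^ 2) ∧
    ∀ ε : ℝ, 0 < ε → ε < μ → ∃ η : ℝ, 0 < η ∧
      (∀ x ∈ Metric.ball xstar η, ∀ v : E,
        ⟪(fderiv ℝ (gradient F) x) v, v⟫ ≥ (μ - ε) * ‖v‖ ^ 2) ∧
      StrongConvexOn (Metric.ball xstar η) (μ - ε) F := by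
  simp only [inner_fderiv_gradient_left]
  exact (stmt_17_general hF.contDiffAt (.of_forall hqg)).imp_right fun h ε hε _ => h ε hε
end

section
/- For every L > 0 and every μ > 0 there exists a differentiable function f : ℝ → ℝ with f(0) = 0 and f'(0) = 0, whose derivative f' is L-Lipschitz on [0,1], such that: (i) f'(x) ≥ (L/2)x for all x ∈ [0,1] (so 0 is the unique minimizer of f on [0,1]); (ii) f is (L/(μ+L), μ)-strongly quasar convex on [0,1] with respect to 0, i.e. for all x ∈ [0,1], f(x) − ((μ+L)/L) f'(x)·x + (μ/2)x² ≤ 0; and (iii) for every ε > 0 there exists x₀ ∈ (0, ε) at which f is twice differentiable with f''(x₀) = −L. In particular the lower curvature bound −L is attained in every neighborhood of the minimizer. -/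
/-!
Only the derivative matters: if `x / 2 ≤ f' x / L ≤ x` for `x ≥ 0`, then integrating the upper bound
gives `f x ≤ L / 2 * x ^ 2`, and the lower bound multiplied by `(μ + L) / L * x` exceeds this by
exactly `μ / 2 * x ^ 2`. It remains to find a `1`-Lipschitz function between `x / 2` and `x` that
descends with slope `-1` arbitrarily close to `0`. The largest `1`-Lipschitz function that is at
most `x` everywhere and at most `x / 2` at the points `x = 2⁻ⁿ` does so immediately to the left of
each of these points.
-/

open Set
open scoped NNReal

lemma lipschitzWith_iInf {ι α : Type*} [Nonempty ι] [PseudoMetricSpace α] {K : ℝ≥0}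
    {f : ι → α → ℝ} (hf : ∀ i, LipschitzWith K (f i))
    (hbdd : ∀ x, BddBelow (range fun i => f i x)) : LipschitzWith K fun x => ⨅ i, f i x :=
  LipschitzWith.of_le_add_mul K fun x y => sub_le_iff_le_add.1 <| le_ciInf fun i =>
    sub_le_iff_le_add.2 <| (ciInf_le (hbdd x) i).trans <| (hf i).le_add_mul x y

section QuasarConvexity

variable {f : ℝ → ℝ} {L m μ : ℝ}

lemma le_half_mul_sq_of_deriv_mul_self_le (hf : Differentiable ℝ f) (hf₀ : f 0 = 0)
    (hle : ∀ x, deriv f x * x ≤ L * x ^ 2) (x : ℝ) : f x ≤ L / 2 * x ^ 2 := by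
  have hgap (y : ℝ) : HasDerivAt (fun y => L / 2 * y ^ 2 - f y) (L * y - deriv f y) y :=
    (((hasDerivAt_pow 2 y).const_mul (L / 2)).sub (hf y).hasDerivAt).congr_deriv <| by
      push_cast
      ring
  have hsign (y : ℝ) : 0 ≤ (L * y - deriv f y) * y := by
    linarith [hle y]
  have hmin : IsMinOn (fun y => L / 2 * y ^ 2 - f y) univ 0 := by
    refine isMinOn_univ_of_deriv (hgap 0).continuousAt
      (fun y _ => (hgap y).differentiableAt.differentiableWithinAt)
      (fun y _ => (hgap y).differentiableAt.differentiableWithinAt)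
      (fun y (hy : y < 0) => ?_) (fun y (hy : 0 < y) => ?_)
    · rw [(hgap y).deriv]
      exact nonpos_of_mul_nonneg_left (hsign y) hy
    · rw [(hgap y).deriv]
      exact nonneg_of_mul_nonneg_left (hsign y) hy
  linarith [isMinOn_iff.1 hmin x (mem_univ x)]

lemma quasar_convex_of_deriv_mul_self_bounds (hf : Differentiable ℝ f) (hf₀ : f 0 = 0)
    (hm : 0 < m) (hμ : -L ≤ μ) (hupper : ∀ x, deriv f x * x ≤ L * x ^ 2)
    {x : ℝ} (hlower : m * x ^ 2 ≤ deriv f x * x) :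
    f x - (μ + L) / (2 * m) * (deriv f x * x) + μ / 2 * x ^ 2 ≤ 0 := by
  have hgrowth := le_half_mul_sq_of_deriv_mul_self_le hf hf₀ hupper x
  have hγ : 0 ≤ (μ + L) / (2 * m) := div_nonneg (by linarith) (by positivity)
  have hslope : (μ + L) / 2 * x ^ 2 ≤ (μ + L) / (2 * m) * (deriv f x * x) :=
    calc (μ + L) / 2 * x ^ 2 = (μ + L) / (2 * m) * (m * x ^ 2) := by field_simp
      _ ≤ _ := mul_le_mul_of_nonneg_left hlower hγ
  linarith

end QuasarConvexity

section Zigzag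

variable {ι : Type*} {a : ι → ℝ} {i : ι} {x : ℝ}

/-- The largest `1`-Lipschitz function `h` with `h x ≤ x` for all `x` and `h (a i) ≤ a i / 2` for
all `i`. The index type is meant to be nonempty: an empty infimum is `0` in `ℝ`. -/
noncomputable def zigzag (a : ι → ℝ) (x : ℝ) : ℝ := min x (⨅ i, (a i / 2 + |x - a i|))

lemma half_le_half_add_abs_sub (x y : ℝ) : x / 2 ≤ y / 2 + |x - y| := by
  linarith [le_abs_self (x - y), abs_nonneg (x - y)]

lemma bddBelow_range_half_add_abs_sub (a : ι → ℝ) (x : ℝ) :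
    BddBelow (range fun i => a i / 2 + |x - a i|) :=
  ⟨x / 2, forall_mem_range.2 fun i => half_le_half_add_abs_sub x (a i)⟩

lemma zigzag_le_self (a : ι → ℝ) (x : ℝ) : zigzag a x ≤ x := min_le_left _ _

variable [Nonempty ι]

lemma min_self_half_le_zigzag (a : ι → ℝ) (x : ℝ) : min x (x / 2) ≤ zigzag a x :=
  min_le_min_left x <| le_ciInf fun i => half_le_half_add_abs_sub x (a i)

lemma half_le_zigzag (a : ι → ℝ) (hx : 0 ≤ x) : x / 2 ≤ zigzag a x := by
  simpa only [min_eq_right (half_le_self hx)] using min_self_half_le_zigzag a x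

lemma zigzag_of_nonpos (a : ι → ℝ) (hx : x ≤ 0) : zigzag a x = x :=
  (zigzag_le_self a x).antisymm <| by
    simpa only [min_eq_left (show x ≤ x / 2 by linarith)] using min_self_half_le_zigzag a x

lemma zigzag_mul_self_le_sq (a : ι → ℝ) (x : ℝ) : zigzag a x * x ≤ x ^ 2 := by
  rcases le_total 0 x with hx | hx
  · nlinarith [zigzag_le_self a x]
  · rw [zigzag_of_nonpos a hx, sq]

lemma half_sq_le_zigzag_mul_self (a : ι → ℝ) (x : ℝ) : x ^ 2 / 2 ≤ zigzag a x * x := by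
  rcases le_total 0 x with hx | hx
  · nlinarith [half_le_zigzag a hx]
  · rw [zigzag_of_nonpos a hx]
    nlinarith

lemma lipschitzWith_zigzag (a : ι → ℝ) : LipschitzWith 1 (zigzag a) := by
  have htent (i : ι) : LipschitzWith 1 fun x => a i / 2 + |x - a i| := by
    simpa only [zero_add, Real.dist_eq] using
      (LipschitzWith.const (a i / 2)).add (LipschitzWith.dist_left (a i))
  simpa only [max_self] using!
    LipschitzWith.id.min (lipschitzWith_iInf htent (bddBelow_range_half_add_abs_sub a))

lemma zigzag_eq_sub (hgap : ∀ j, a j ≤ a i / 2 ∨ a i ≤ a j) (hx : x ∈ Icc (7 / 8 * a i) (a i)) :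
    zigzag a x = 3 / 2 * a i - x := by
  obtain ⟨hx₁, hx₂⟩ := hx
  apply le_antisymm
  · calc zigzag a x ≤ a i / 2 + |x - a i| :=
          (min_le_right _ _).trans (ciInf_le (bddBelow_range_half_add_abs_sub a x) i)
      _ = 3 / 2 * a i - x := by
          rw [abs_of_nonpos (sub_nonpos.2 hx₂)]
          ring
  · refine le_min (by linarith) (le_ciInf fun j => ?_)
    rcases hgap j with hj | hj
    · linarith [le_abs_self (x - a j)]
    · linarith [neg_le_abs (x - a j)]

lemma hasDerivAt_zigzag (hgap : ∀ j, a j ≤ a i / 2 ∨ a i ≤ a j)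
    (hx : x ∈ Ioo (7 / 8 * a i) (a i)) : HasDerivAt (zigzag a) (-1) x :=
  ((hasDerivAt_id' x).const_sub (3 / 2 * a i)).congr_of_eventuallyEq <| by
    filter_upwards [Icc_mem_nhds hx.1 hx.2] with y hy using zigzag_eq_sub hgap hy

end Zigzag

lemma half_pow_le_half_or_le (n k : ℕ) :
    (1 / 2 : ℝ) ^ k ≤ (1 / 2) ^ n / 2 ∨ (1 / 2 : ℝ) ^ n ≤ (1 / 2) ^ k := by
  rcases lt_or_ge n k with h | h
  · left
    calc (1 / 2 : ℝ) ^ k ≤ (1 / 2) ^ (n + 1) :=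
          pow_le_pow_of_le_one (by norm_num) (by norm_num) h
      _ = (1 / 2) ^ n / 2 := by ring
  · exact .inr (pow_le_pow_of_le_one (by norm_num) (by norm_num) h)

lemma exists_hasDerivAt_zigzag_half_pow {ε : ℝ} (hε : 0 < ε) :
    ∃ x ∈ Ioo 0 ε, HasDerivAt (zigzag fun n : ℕ => (1 / 2 : ℝ) ^ n) (-1) x := by
  obtain ⟨n, hn⟩ := exists_pow_lt_of_lt_one hε (show (1 / 2 : ℝ) < 1 by norm_num)
  have hpos : (0 : ℝ) < (1 / 2) ^ n := by positivity
  exact ⟨15 / 16 * (1 / 2) ^ n, ⟨by positivity, by linarith⟩,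
    hasDerivAt_zigzag (i := n) (half_pow_le_half_or_le n) ⟨by linarith, by linarith⟩⟩

lemma exists_primitive_of_continuous {E : Type*} [NormedAddCommGroup E] [NormedSpace ℝ E]
    [CompleteSpace E] {g : ℝ → E} (hg : Continuous g) (a : ℝ) :
    ∃ f : ℝ → E, Differentiable ℝ f ∧ f a = 0 ∧ deriv f = g := by
  have hprim (x : ℝ) : HasDerivAt (fun x => ∫ t in a..x, g t) (g x) x :=
    (hg.integral_hasStrictDerivAt a x).hasDerivAt
  exact ⟨_, fun x => (hprim x).differentiableAt, intervalIntegral.integral_same,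
    funext fun x => (hprim x).deriv⟩

theorem stmt_18_general {L : ℝ} (hL : 0 < L) :
    ∃ f : ℝ → ℝ, Differentiable ℝ f ∧ f 0 = 0 ∧ deriv f 0 = 0 ∧
      LipschitzWith (Real.toNNReal L) (deriv f) ∧
      (∀ x, 0 ≤ x → L / 2 * x ≤ deriv f x) ∧
      (∀ μ, -L ≤ μ → ∀ x, f x - (μ + L) / L * (deriv f x * x) + μ / 2 * x ^ 2 ≤ 0) ∧
      (∀ ε : ℝ, 0 < ε → ∃ x₀ ∈ Ioo (0 : ℝ) ε,
        DifferentiableAt ℝ (deriv f) x₀ ∧ deriv (deriv f) x₀ = -L) := by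
  set a : ℕ → ℝ := fun n => (1 / 2) ^ n
  have hLip : LipschitzWith (Real.toNNReal L) fun x => L * zigzag a x := by
    simpa only [mul_one, Real.nnnorm_of_nonneg hL.le, Real.toNNReal_of_nonneg hL.le] using!
      (lipschitzWith_smul L).comp (lipschitzWith_zigzag a)
  obtain ⟨f, hf, hf₀, hderiv⟩ := exists_primitive_of_continuous hLip.continuous 0
  have hlower (x : ℝ) : L / 2 * x ^ 2 ≤ deriv f x * x :=
    calc L / 2 * x ^ 2 = L * (x ^ 2 / 2) := by ring
      _ ≤ L * (zigzag a x * x) := by gcongr; exact half_sq_le_zigzag_mul_self a x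
      _ = deriv f x * x := by rw [hderiv, mul_assoc]
  have hupper (x : ℝ) : deriv f x * x ≤ L * x ^ 2 := by
    rw [hderiv, mul_assoc]
    exact mul_le_mul_of_nonneg_left (zigzag_mul_self_le_sq a x) hL.le
  refine ⟨f, hf, hf₀, ?_, hderiv ▸ hLip, fun x hx => ?_, fun μ hμ x => ?_, fun ε hε => ?_⟩
  · simp only [hderiv, zigzag_of_nonpos a le_rfl, mul_zero]
  · calc L / 2 * x = L * (x / 2) := by ring
      _ ≤ L * zigzag a x := by gcongr; exact half_le_zigzag a hx
      _ = deriv f x := by rw [hderiv]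
  · simpa only [mul_div_cancel₀ L two_ne_zero] using
      quasar_convex_of_deriv_mul_self_bounds hf hf₀ (half_pos hL) hμ hupper (hlower x)
  · obtain ⟨x₀, hx₀, hslope⟩ := exists_hasDerivAt_zigzag_half_pow hε
    have hcurv : HasDerivAt (deriv f) (-L) x₀ := by
      simpa only [hderiv, mul_neg_one] using hslope.const_mul L
    exact ⟨x₀, hx₀, hcurv.differentiableAt, hcurv.deriv⟩

/-- for all `L > 0` and `μ > 0` there exists a differentiable
`f : ℝ → ℝ` with `f 0 = 0`, `f' 0 = 0`, `f'` `L`-Lipschitz on `[0,1]`, such that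
(i) `f' x ≥ (L/2) x` on `[0,1]`, (ii) `f` is `(L/(μ+L), μ)`-strongly quasar
convex on `[0,1]` with respect to `0`, and (iii) in every right-neighborhood of
`0` there is a point where `f` is twice differentiable with second derivative
`-L`. -/
theorem stmt_18 :
    ∀ L : ℝ, 0 < L → ∀ μ : ℝ, 0 < μ →
      ∃ f : ℝ → ℝ, Differentiable ℝ f ∧ f 0 = 0 ∧ deriv f 0 = 0 ∧
        LipschitzOnWith (Real.toNNReal L) (deriv f) (Set.Icc 0 1) ∧
        (∀ x ∈ Set.Icc (0 : ℝ) 1, L / 2 * x ≤ deriv f x) ∧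
        (∀ x ∈ Set.Icc (0 : ℝ) 1,
          f x - (μ + L) / L * (deriv f x * x) + μ / 2 * x ^ 2 ≤ 0) ∧
        (∀ ε : ℝ, 0 < ε → ∃ x₀ ∈ Set.Ioo (0 : ℝ) ε,
          DifferentiableAt ℝ (deriv f) x₀ ∧ deriv (deriv f) x₀ = -L) := by
  intro L hL μ hμ
  obtain ⟨f, hf, hf₀, hf'₀, hLip, hlower, hquasar, hcurv⟩ := stmt_18_general hL
  exact ⟨f, hf, hf₀, hf'₀, hLip.lipschitzOnWith, fun x hx => hlower x hx.1,
    fun x _ => hquasar μ (by linarith) x, hcurv⟩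
end

section
/- There exists a differentiable function f : ℝ → ℝ with f(0) = 0 and f'(0) = 0 such that: (i) f has 5/12-quadratic growth on [0,1], i.e. f(x) ≥ (5/24)x² for all x ∈ [0,1] (so 0 is the unique minimizer of f on [0,1]); and (ii) f'(2^{−n}) = 0 for every integer n ≥ 0. In particular f has infinitely many critical points in every neighborhood of its minimizer 0. -/
/-!
Multiply `x ^ 2` by a bounded factor `m ≥ 1` which is periodic in `log x`. Boundedness makes the
product differentiable at `0`. Choosing the logarithm of `m` to be a suitable multiple of
`1 - sin θ`, with `θ = 2 * π * logb r x`, gives the product the derivative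
`2 * x * m x * (1 - cos θ)`: it never changes sign on `x > 0`, but vanishes at every power of `r`.
-/

open Asymptotics Real Topology

lemma hasDerivAt_sq_mul_zero {m : ℝ → ℝ} (hm : m =O[𝓝 0] fun _ ↦ (1 : ℝ)) :
    HasDerivAt (fun x ↦ x ^ 2 * m x) 0 0 := by
  have hO : (fun x ↦ x ^ 2 * m x) =O[𝓝 0] fun x ↦ ‖x - 0‖ ^ 2 := by
    simpa using (isBigO_refl (fun x : ℝ ↦ x ^ 2) (𝓝 0)).mul hm
  simpa using (hO.hasFDerivAt one_lt_two).hasDerivAt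

/-- The oscillating factor of `logPeriodicQuadratic`: it is invariant under `x ↦ r * x` for
`x ≠ 0`. The exponent is normalized so that the factor is at least `1` and its logarithmic
derivative is `-2 * cos (2 * π * logb r x) / x`. -/
noncomputable def logPeriodicFactor (r x : ℝ) : ℝ :=
  r ^ ((1 - sin (2 * π * logb r x)) / π)

/-- A function of quadratic growth at `0` that is stationary at every integer power of `r`. -/
noncomputable def logPeriodicQuadratic (r x : ℝ) : ℝ :=
  x ^ 2 * logPeriodicFactor r x

section

variable {r x : ℝ}

lemma one_le_logPeriodicFactor (hr : 1 ≤ r) (x : ℝ) : 1 ≤ logPeriodicFactor r x :=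
  one_le_rpow hr (div_nonneg (sub_nonneg.mpr (sin_le_one _)) pi_pos.le)

lemma logPeriodicFactor_le (hr : 1 ≤ r) (x : ℝ) : logPeriodicFactor r x ≤ r ^ (2 / π) := by
  refine rpow_le_rpow_of_exponent_le hr ?_
  gcongr
  linarith [neg_one_le_sin (2 * π * logb r x)]

lemma hasDerivAt_logPeriodicFactor (hr : 1 < r) (hx : x ≠ 0) :
    HasDerivAt (logPeriodicFactor r)
      (-2 * cos (2 * π * logb r x) / x * logPeriodicFactor r x) x := by
  have hlog : log r ≠ 0 := (log_pos hr).ne'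
  have hθ : HasDerivAt (fun y ↦ 2 * π * logb r y) (2 * π * (x⁻¹ / log r)) x :=
    ((hasDerivAt_log hx).div_const (log r)).const_mul (2 * π)
  refine (((hθ.sin.const_sub 1).div_const π).const_rpow (zero_lt_one.trans hr)).congr_deriv ?_
  simp only [logPeriodicFactor]
  field_simp

lemma sq_le_logPeriodicQuadratic (hr : 1 ≤ r) (x : ℝ) : x ^ 2 ≤ logPeriodicQuadratic r x :=
  le_mul_of_one_le_right (sq_nonneg x) (one_le_logPeriodicFactor hr x)

lemma hasDerivAt_logPeriodicQuadratic_zero (hr : 1 ≤ r) :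
    HasDerivAt (logPeriodicQuadratic r) 0 0 := by
  refine hasDerivAt_sq_mul_zero (.of_bound (r ^ (2 / π)) (.of_forall fun x ↦ ?_))
  have hpos : 0 ≤ logPeriodicFactor r x := zero_le_one.trans (one_le_logPeriodicFactor hr x)
  simpa [abs_of_nonneg hpos] using logPeriodicFactor_le hr x

lemma hasDerivAt_logPeriodicQuadratic (hr : 1 < r) (hx : x ≠ 0) :
    HasDerivAt (logPeriodicQuadratic r)
      (2 * x * logPeriodicFactor r x * (1 - cos (2 * π * logb r x))) x := by
  refine ((hasDerivAt_pow 2 x).mul (hasDerivAt_logPeriodicFactor hr hx)).congr_deriv ?_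
  field_simp
  ring

lemma differentiable_logPeriodicQuadratic (hr : 1 < r) :
    Differentiable ℝ (logPeriodicQuadratic r) := by
  intro x
  rcases eq_or_ne x 0 with rfl | hx
  · exact (hasDerivAt_logPeriodicQuadratic_zero hr.le).differentiableAt
  · exact (hasDerivAt_logPeriodicQuadratic hr hx).differentiableAt

lemma deriv_logPeriodicQuadratic_zpow (hr : 1 < r) (n : ℤ) :
    deriv (logPeriodicQuadratic r) (r ^ n) = 0 := by
  have hr₀ : 0 < r := zero_lt_one.trans hr
  have hcos : cos (2 * π * logb r (r ^ n)) = 1 := by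
    rw [← rpow_intCast, logb_rpow hr₀ hr.ne', mul_comm, cos_int_mul_two_pi]
  rw [(hasDerivAt_logPeriodicQuadratic hr (zpow_pos hr₀ n).ne').deriv, hcos, sub_self, mul_zero]

end

theorem stmt_19_general {r : ℝ} (hr : 1 < r) :
    ∃ f : ℝ → ℝ, Differentiable ℝ f ∧ f 0 = 0 ∧ deriv f 0 = 0 ∧
      (∀ x, x ^ 2 ≤ f x) ∧ (∀ n : ℤ, deriv f (r ^ n) = 0) :=
  ⟨logPeriodicQuadratic r, differentiable_logPeriodicQuadratic hr,
    by simp [logPeriodicQuadratic], (hasDerivAt_logPeriodicQuadratic_zero hr.le).deriv,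
    sq_le_logPeriodicQuadratic hr.le, deriv_logPeriodicQuadratic_zpow hr⟩

/-- there exists a differentiable `f : ℝ → ℝ` with `f 0 = 0` and
`f' 0 = 0` which has `5/12`-quadratic growth on `[0,1]` (so `0` is its unique
minimizer there) and whose derivative vanishes at every point `2⁻ⁿ`, `n ≥ 0`:
infinitely many critical points in every neighborhood of the minimizer. -/
theorem stmt_19 :
    ∃ f : ℝ → ℝ, Differentiable ℝ f ∧ f 0 = 0 ∧ deriv f 0 = 0 ∧
      (∀ x ∈ Set.Icc (0 : ℝ) 1, 5 / 24 * x ^ 2 ≤ f x) ∧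
      (∀ n : ℕ, deriv f ((1 / 2 : ℝ) ^ n) = 0) := by
  obtain ⟨f, hf, hf₀, hf'₀, hgrowth, hcrit⟩ := stmt_19_general one_lt_two
  exact ⟨f, hf, hf₀, hf'₀, fun x _ ↦ by linarith [hgrowth x, sq_nonneg x],
    fun n ↦ by simpa using hcrit (-n)⟩
end
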